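/- An N-point configuration X_N on the unit sphere S^d (d ≥ 2) has minimal spherical cap L2-discrepancy among all N-point configurations on S^d if and only if X_N has maximal sum of pairwise Euclidean distances among all N-point configurations on S^d. -/

import Mathlib

open MeasureTheory Metric Real Filter
open scoped BigOperators ENNReal NNReal RealInnerProductSpace Topology

noncomputable section

/-- Normalized uniform (surface) probability measure `σ_d` on the unit sphere
`S^d ⊂ ℝ^{d+1}`, defined as normalized `d`-dimensional Hausdorff measure. -/
def sigmaMeasure (d : ℕ) : Measure (EuclideanSpace ℝ (Fin (d + 1))) :=
  (μH[(d : ℝ)] (sphere (0 : EuclideanSpace ℝ (Fin (d + 1))) 1))⁻¹ •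
    μH[(d : ℝ)].restrict (sphere (0 : EuclideanSpace ℝ (Fin (d + 1))) 1)

/-- Squared spherical cap `L²` discrepancy of the `N`-point configuration `x` on `S^d`:
`∫_{-1}^{1} ∫_{S^d} |#{k : x_k ∈ C(y;t)}/N − σ_d(C(y;t))|² dσ_d(y) dt`. -/
def L2DiscSq (d N : ℕ) (x : Fin N → EuclideanSpace ℝ (Fin (d + 1))) : ℝ :=
  ∫ t in Set.Icc (-1 : ℝ) 1, ∫ y,
    ((Nat.card {k : Fin N // t ≤ ⟪y, x k⟫} : ℝ) / N
      - (sigmaMeasure d {z | t ≤ ⟪y, z⟫}).toReal) ^ 2 ∂ sigmaMeasure d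

/-- Spherical cap `L²` discrepancy. -/
def L2Disc (d N : ℕ) (x : Fin N → EuclideanSpace ℝ (Fin (d + 1))) : ℝ :=
  Real.sqrt (L2DiscSq d N x)


lemma sphere_pos (d : ℕ) : μH[(d : ℝ)] (sphere (0 : EuclideanSpace ℝ (Fin (d + 1))) 1) ≠ 0 := by
  set P : EuclideanSpace ℝ (Fin (d + 1)) → (Fin d → ℝ) := fun y i => y i.succ with hP
  have hL : LipschitzWith 1 P := by
    refine LipschitzWith.of_dist_le_mul fun a b => ?_
    rw [NNReal.coe_one, one_mul, dist_pi_le_iff dist_nonneg]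
    intro i
    rw [dist_eq_norm, dist_eq_norm]
    simpa [hP] using PiLp.norm_apply_le (a - b) i.succ
  have h1 := hL.hausdorffMeasure_image_le (d := (d:ℝ)) (by positivity)
    (sphere (0 : EuclideanSpace ℝ (Fin (d + 1))) 1)
  have hU : IsOpen {u : Fin d → ℝ | ∑ i, u i ^ 2 < 1} :=
    isOpen_lt (by fun_prop) continuous_const
  have hsub : {u : Fin d → ℝ | ∑ i, u i ^ 2 < 1} ⊆
      P '' (sphere (0 : EuclideanSpace ℝ (Fin (d + 1))) 1) := by
    intro u hu
    have hu' : ∑ i, u i ^ 2 < 1 := hu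
    refine ⟨WithLp.toLp 2 (Fin.cons (Real.sqrt (1 - ∑ i, u i ^ 2)) u : Fin (d+1) → ℝ), ?_, ?_⟩
    · rw [mem_sphere_zero_iff_norm, EuclideanSpace.norm_eq, Fin.sum_univ_succ]
      simp only [Fin.cons_zero, Fin.cons_succ, Real.norm_eq_abs, sq_abs]
      rw [Real.sq_sqrt (by linarith)]
      simp
    · ext i; simp [hP]
  have hpos : 0 < (volume : Measure (Fin d → ℝ)) {u : Fin d → ℝ | ∑ i, u i ^ 2 < 1} :=
    hU.measure_pos _ ⟨0, by simp⟩
  have hv := hausdorffMeasure_pi_real (ι := Fin d)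
  rw [Fintype.card_fin] at hv
  intro h0
  rw [h0, mul_zero, hv] at h1
  exact absurd (measure_mono hsub) (not_le.2 (lt_of_le_of_lt h1 hpos))

lemma sphere_fin (d : ℕ) : μH[(d : ℝ)] (sphere (0 : EuclideanSpace ℝ (Fin (d + 1))) 1) ≠ ⊤ := by
  let L : Fin (d+1) → ℝ → (Fin d → ℝ) → EuclideanSpace ℝ (Fin (d + 1)) := fun i s u =>
    WithLp.toLp 2 (i.insertNth s u : Fin (d+1) → ℝ)
  let F : Fin (d+1) → ℝ → (Fin d → ℝ) → EuclideanSpace ℝ (Fin (d + 1)) := fun i s u =>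
    ‖L i s u‖⁻¹ • L i s u
  have hLs : ∀ i s, ContDiff ℝ 1 (L i s) := by
    intro i s
    rw [contDiff_euclidean]
    intro j
    refine Fin.succAboveCases i ?_ (fun k => ?_) j
    · simp only [L, Fin.insertNth_apply_same]; fun_prop
    · simp only [L, Fin.insertNth_apply_succAbove]; fun_prop
  have hne : ∀ i s, s ≠ 0 → ∀ u, L i s u ≠ 0 := by
    intro i s hs u h
    have := congrArg (fun y : EuclideanSpace ℝ (Fin (d + 1)) => y i) h
    simp [L] at this
    exact hs this
  have hF : ∀ i s, s ≠ 0 → ContDiff ℝ 1 (F i s) := by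
    intro i s hs
    exact (((hLs i s).norm ℝ (hne i s hs)).inv (fun u => norm_ne_zero_iff.2 (hne i s hs u))).smul (hLs i s)
  have hv := hausdorffMeasure_pi_real (ι := Fin d)
  rw [Fintype.card_fin] at hv
  have hfin : ∀ i s, s ≠ 0 → μH[(d : ℝ)] (F i s '' closedBall 0 1) < ⊤ := by
    intro i s hs
    obtain ⟨K, hK⟩ := (hF i s hs).contDiffOn.exists_lipschitzOnWith (s := closedBall 0 1) one_ne_zero
      (convex_closedBall _ _) (isCompact_closedBall _ _)
    refine lt_of_le_of_lt (hK.hausdorffMeasure_image_le (by positivity)) ?_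
    rw [hv]
    exact ENNReal.mul_lt_top (ENNReal.rpow_lt_top_of_nonneg (by positivity) (by simp))
      (isCompact_closedBall _ _).measure_lt_top
  have hcov : sphere (0 : EuclideanSpace ℝ (Fin (d + 1))) 1 ⊆
      ⋃ i, (F i 1 '' closedBall 0 1 ∪ F i (-1) '' closedBall 0 1) := by
    intro y hy
    rw [mem_sphere_zero_iff_norm] at hy
    obtain ⟨i, hi⟩ := Finite.exists_max (fun i => |y i|)
    have hyi : y i ≠ 0 := by
      intro h0
      have : y = 0 := by
        ext j
        have := hi j
        simp only [h0, abs_zero] at this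
        simpa using this
      simp [this] at hy
    have hpos : 0 < |y i| := abs_pos.2 hyi
    have key : ∀ s : ℝ, s * |y i| = y i → y ∈ F i s '' closedBall 0 1 := by
      intro s hs
      refine ⟨fun k => |y i|⁻¹ * y (i.succAbove k), ?_, ?_⟩
      · rw [mem_closedBall_zero_iff, pi_norm_le_iff_of_nonneg zero_le_one]
        intro k
        rw [Real.norm_eq_abs, abs_mul, abs_inv, abs_abs, inv_mul_le_iff₀ hpos, mul_one]
        exact hi _
      · have hL : L i s (fun k => |y i|⁻¹ * y (i.succAbove k)) = |y i|⁻¹ • y := by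
          ext j
          refine Fin.succAboveCases i ?_ (fun k => ?_) j
          · have : s = |y i|⁻¹ * y i := by
              rw [eq_inv_mul_iff_mul_eq₀ hpos.ne', mul_comm]; exact hs
            simpa [L] using this
          · simp [L]
        simp only [F]
        rw [hL, norm_smul, hy, norm_inv, Real.norm_eq_abs, abs_abs, mul_one, inv_inv, smul_smul,
          mul_inv_cancel₀ hpos.ne', one_smul]
    refine Set.mem_iUnion.2 ⟨i, ?_⟩
    rcases lt_or_gt_of_ne hyi with h | h
    · right; apply key; rw [abs_of_neg h]; ring
    · left; apply key; rw [abs_of_pos h]; ring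
  refine (lt_of_le_of_lt ((measure_mono hcov).trans (measure_iUnion_fintype_le _ _)) ?_).ne
  exact ENNReal.sum_lt_top.2 fun i _ => lt_of_le_of_lt (measure_union_le _ _)
    (ENNReal.add_lt_top.2 ⟨hfin i 1 one_ne_zero, hfin i (-1) (by norm_num)⟩)

instance sigma_prob (d : ℕ) : IsProbabilityMeasure (sigmaMeasure d) := by
  constructor
  simp only [sigmaMeasure, Measure.smul_apply, Measure.restrict_apply_univ, smul_eq_mul]
  exact ENNReal.inv_mul_cancel (sphere_pos d) (sphere_fin d)

lemma sigma_mp (d : ℕ) (e : EuclideanSpace ℝ (Fin (d + 1)) ≃ₗᵢ[ℝ] EuclideanSpace ℝ (Fin (d + 1))) :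
    MeasurePreserving e (sigmaMeasure d) (sigmaMeasure d) := by
  have h := (e.toIsometryEquiv.measurePreserving_hausdorffMeasure (d : ℝ)).restrict_preimage
    (s := sphere (0 : EuclideanSpace ℝ (Fin (d + 1))) 1) isClosed_sphere.measurableSet
  have h2 : e.toIsometryEquiv ⁻¹' (sphere (0 : EuclideanSpace ℝ (Fin (d + 1))) 1) =
      sphere (0 : EuclideanSpace ℝ (Fin (d + 1))) 1 := by
    ext y; simp
  rw [h2] at h
  exact h.smul_measure _

lemma sigma_ae (d : ℕ) : ∀ᵐ y ∂(sigmaMeasure d), ‖y‖ = 1 := by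
  have h : ∀ᵐ y ∂((μH[(d : ℝ)] : Measure (EuclideanSpace ℝ (Fin (d + 1)))).restrict (sphere 0 1)),
      y ∈ sphere (0 : EuclideanSpace ℝ (Fin (d + 1))) 1 :=
    ae_restrict_mem isClosed_sphere.measurableSet
  have := Measure.ae_smul_measure h
    (μH[(d : ℝ)] (sphere (0 : EuclideanSpace ℝ (Fin (d + 1))) 1))⁻¹
  filter_upwards [this] with y hy
  simpa using hy

lemma exists_rot {d : ℕ} {v w : EuclideanSpace ℝ (Fin (d + 1))} (h : ‖v‖ = ‖w‖) :
    ∃ e : EuclideanSpace ℝ (Fin (d + 1)) ≃ₗᵢ[ℝ] EuclideanSpace ℝ (Fin (d + 1)), e v = w :=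
  ⟨_, Submodule.reflection_sub h⟩

lemma integral_rot {d : ℕ} {v w : EuclideanSpace ℝ (Fin (d + 1))} (h : ‖v‖ = ‖w‖) (f : ℝ → ℝ) :
    ∫ y, f ⟪y, v⟫ ∂(sigmaMeasure d) = ∫ y, f ⟪y, w⟫ ∂(sigmaMeasure d) := by
  obtain ⟨e, rfl⟩ := exists_rot h
  have h1 := (sigma_mp d e).integral_comp e.toHomeomorph.measurableEmbedding
    (fun y => f ⟪y, e v⟫)
  rw [← h1]
  simp

lemma cap_inv {d : ℕ} {v w : EuclideanSpace ℝ (Fin (d + 1))} (h : ‖v‖ = ‖w‖) (t : ℝ) :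
    sigmaMeasure d {z | t ≤ ⟪w, z⟫} = sigmaMeasure d {z | t ≤ ⟪v, z⟫} := by
  obtain ⟨e, rfl⟩ := exists_rot h
  have hs : MeasurableSet {z | t ≤ ⟪e v, z⟫} :=
    (isClosed_le continuous_const (by fun_prop)).measurableSet
  rw [← (sigma_mp d e).measure_preimage hs.nullMeasurableSet]
  simp

/-- north pole -/
def e0 (d : ℕ) : EuclideanSpace ℝ (Fin (d + 1)) := EuclideanSpace.single 0 1

lemma norm_e0 (d : ℕ) : ‖e0 d‖ = 1 := by simp [e0]

def capG (d : ℕ) (t : ℝ) : ℝ := (sigmaMeasure d {z | t ≤ ⟪e0 d, z⟫}).toReal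

def cst (d : ℕ) : ℝ := ∫ y, |⟪y, e0 d⟫| ∂(sigmaMeasure d)

lemma ae_inner_le {d : ℕ} (v : EuclideanSpace ℝ (Fin (d + 1))) :
    ∀ᵐ y ∂(sigmaMeasure d), |⟪y, v⟫| ≤ ‖v‖ := by
  filter_upwards [sigma_ae d] with y hy
  simpa [hy] using abs_real_inner_le_norm y v

lemma int_inner {d : ℕ} (v : EuclideanSpace ℝ (Fin (d + 1))) :
    Integrable (fun y => ⟪y, v⟫) (sigmaMeasure d) := by
  refine Integrable.of_bound (C := ‖v‖) (by fun_prop) ?_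
  simpa using ae_inner_le v

lemma int_abs {d : ℕ} (v : EuclideanSpace ℝ (Fin (d + 1))) :
    ∫ y, |⟪y, v⟫| ∂(sigmaMeasure d) = cst d * ‖v‖ := by
  have h : ‖v‖ = ‖(‖v‖ • e0 d)‖ := by simp [norm_smul, norm_e0]
  rw [integral_rot h (fun s => |s|)]
  simp only [inner_smul_right, abs_mul, abs_norm]
  rw [integral_const_mul, mul_comm]; rfl

lemma cst_pos (d : ℕ) : 0 < cst d := by
  refine lt_of_le_of_ne (integral_nonneg fun _ => abs_nonneg _) fun h0 => ?_
  have h : ∀ i : Fin (d+1), ∀ᵐ y ∂(sigmaMeasure d), y i = 0 := by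
    intro i
    have h1 := int_abs (d := d) (EuclideanSpace.single i 1)
    rw [← h0, zero_mul, integral_eq_zero_iff_of_nonneg (fun _ => abs_nonneg _) (int_inner _).abs] at h1
    filter_upwards [h1] with y hy
    simpa [EuclideanSpace.inner_single_right] using hy
  have h2 : ∀ᵐ y ∂(sigmaMeasure d), False := by
    filter_upwards [ae_all_iff.2 h, sigma_ae d] with y hy h1
    have : y = 0 := by ext i; simpa using hy i
    simp [this] at h1
  exact (IsProbabilityMeasure.ne_zero (sigmaMeasure d)) (by simpa using h2)

lemma meas_cap {d : ℕ} (t : ℝ) (v : EuclideanSpace ℝ (Fin (d + 1))) :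
    MeasurableSet {y : EuclideanSpace ℝ (Fin (d + 1)) | t ≤ ⟪y, v⟫} :=
  (isClosed_le continuous_const (by fun_prop)).measurableSet

def pairM (d : ℕ) (v w : EuclideanSpace ℝ (Fin (d + 1))) (t : ℝ) : ℝ :=
  (sigmaMeasure d).real ({y | t ≤ ⟪y, v⟫} ∩ {y | t ≤ ⟪y, w⟫})

lemma inner_integral {d N : ℕ} (hN : 0 < N) (x : Fin N → EuclideanSpace ℝ (Fin (d + 1)))
    (hx : ∀ k, ‖x k‖ = 1) (t : ℝ) :
    ∫ y, ((Nat.card {k : Fin N // t ≤ ⟪y, x k⟫} : ℝ) / N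
      - (sigmaMeasure d {z | t ≤ ⟪y, z⟫}).toReal) ^ 2 ∂ sigmaMeasure d =
    ((N : ℝ) ^ 2)⁻¹ * (∑ j, ∑ k, pairM d (x j) (x k) t) - capG d t ^ 2 := by
  have hN' : (N : ℝ) ≠ 0 := by positivity
  let I : Fin N → EuclideanSpace ℝ (Fin (d + 1)) → ℝ :=
    fun k => Set.indicator {y | t ≤ ⟪y, x k⟫} (fun _ => (1:ℝ))
  have hcard : ∀ y, (Nat.card {k : Fin N // t ≤ ⟪y, x k⟫} : ℝ) = ∑ k, I k y := by
    intro y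
    classical
    rw [Nat.card_eq_fintype_card, Fintype.card_subtype, Finset.card_filter]
    push_cast
    refine Finset.sum_congr rfl fun k _ => ?_
    simp [I, Set.indicator_apply]
  have hae : ∀ᵐ y ∂(sigmaMeasure d), ((Nat.card {k : Fin N // t ≤ ⟪y, x k⟫} : ℝ) / N
      - (sigmaMeasure d {z | t ≤ ⟪y, z⟫}).toReal) ^ 2 =
      ((N : ℝ) ^ 2)⁻¹ * (∑ j, ∑ k, Set.indicator ({y | t ≤ ⟪y, x j⟫} ∩ {y | t ≤ ⟪y, x k⟫})
        (fun _ => (1:ℝ)) y) - 2 * capG d t * (N : ℝ)⁻¹ * (∑ k, I k y) + capG d t ^ 2 := by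
    filter_upwards [sigma_ae d] with y hy
    rw [hcard, cap_inv (v := e0 d) (by rw [hy, norm_e0])]
    have : ∑ j, ∑ k, Set.indicator ({y | t ≤ ⟪y, x j⟫} ∩ {y | t ≤ ⟪y, x k⟫})
        (fun _ => (1:ℝ)) y = (∑ k, I k y) ^ 2 := by
      rw [sq, Finset.sum_mul_sum]
      refine Finset.sum_congr rfl fun j _ => Finset.sum_congr rfl fun k _ => ?_
      have := Set.inter_indicator_mul (s := {y | t ≤ ⟪y, x j⟫}) (t := {y | t ≤ ⟪y, x k⟫})
        (fun _ => (1:ℝ)) (fun _ => (1:ℝ)) y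
      simpa [I] using this
    rw [this]
    change (_ - capG d t) ^ 2 = _
    field_simp
    ring
  have hi1 : ∀ s : Set (EuclideanSpace ℝ (Fin (d + 1))), MeasurableSet s →
      Integrable (Set.indicator s (fun _ => (1:ℝ))) (sigmaMeasure d) :=
    fun s hs => (integrable_const _).indicator hs
  have hiI : ∀ k, Integrable (I k) (sigmaMeasure d) := fun k => hi1 _ (meas_cap t _)
  have hvI : ∀ k, ∫ y, I k y ∂(sigmaMeasure d) = capG d t := by
    intro k
    simp only [I]
    rw [integral_indicator_const _ (meas_cap t _)]
    simp only [smul_eq_mul, mul_one, capG]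
    rw [cap_inv (v := x k) (w := e0 d) (by rw [hx, norm_e0])]
    simp only [real_inner_comm]
    rfl
  rw [integral_congr_ae hae, integral_add, integral_sub, integral_const_mul, integral_const_mul,
    integral_finsetSum _ (fun k _ => hiI k), integral_finsetSum]
  · simp only [hvI]
    have : ∀ j, ∫ y, ∑ k, Set.indicator ({y | t ≤ ⟪y, x j⟫} ∩ {y | t ≤ ⟪y, x k⟫})
        (fun _ => (1:ℝ)) y ∂(sigmaMeasure d) = ∑ k, pairM d (x j) (x k) t := by
      intro j
      rw [integral_finsetSum _ (fun k _ => hi1 _ ((meas_cap t _).inter (meas_cap t _)))]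
      refine Finset.sum_congr rfl fun k _ => ?_
      rw [integral_indicator_const _ ((meas_cap t _).inter (meas_cap t _))]
      simp [pairM]
    simp only [this]
    simp
    field_simp
    ring
  · intro j _
    exact integrable_finsetSum _ (fun k _ => hi1 _ ((meas_cap t _).inter (meas_cap t _)))
  · exact (integrable_finsetSum _ fun j _ =>
      integrable_finsetSum _ (fun k _ => hi1 _ ((meas_cap t _).inter (meas_cap t _)))).const_mul _
  · exact (integrable_finsetSum _ fun k _ => hiI k).const_mul _
  · exact ((integrable_finsetSum _ fun j _ =>
      integrable_finsetSum _ (fun k _ => hi1 _ ((meas_cap t _).inter (meas_cap t _)))).const_mul _).sub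
      ((integrable_finsetSum _ fun k _ => hiI k).const_mul _)
  · exact integrable_const _

lemma pairM_anti (d : ℕ) (v w : EuclideanSpace ℝ (Fin (d + 1))) : Antitone (pairM d v w) := by
  intro s t hst
  exact measureReal_mono (fun y hy => ⟨hst.trans hy.1, hst.trans hy.2⟩)

lemma pairM_int (d : ℕ) (v w : EuclideanSpace ℝ (Fin (d + 1))) :
    IntegrableOn (pairM d v w) (Set.Icc (-1) 1) :=
  ((pairM_anti d v w).antitoneOn _).integrableOn_isCompact isCompact_Icc

lemma capG_int (d : ℕ) : IntegrableOn (fun t => capG d t ^ 2) (Set.Icc (-1) 1) := by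
  have : Antitone (fun t => capG d t ^ 2) := by
    intro s t hst
    refine pow_le_pow_left₀ ENNReal.toReal_nonneg ?_ 2
    exact ENNReal.toReal_mono (measure_ne_top _ _) (measure_mono fun y hy => le_trans hst hy)
  exact (this.antitoneOn _).integrableOn_isCompact isCompact_Icc

lemma pairM_val {d : ℕ} (v w : EuclideanSpace ℝ (Fin (d + 1))) (hv : ‖v‖ = 1) (hw : ‖w‖ = 1) :
    ∫ t in Set.Icc (-1 : ℝ) 1, pairM d v w t =
      1 + (∫ y, ⟪y, e0 d⟫ ∂(sigmaMeasure d)) - cst d / 2 * dist v w := by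
  let S : Set (ℝ × EuclideanSpace ℝ (Fin (d + 1))) := {p | p.1 ≤ ⟪p.2, v⟫ ∧ p.1 ≤ ⟪p.2, w⟫}
  have hS : MeasurableSet S := by
    have c1 : IsClosed {p : ℝ × EuclideanSpace ℝ (Fin (d + 1)) | p.1 ≤ ⟪p.2, v⟫} :=
      isClosed_le (by fun_prop) (by fun_prop)
    have c2 : IsClosed {p : ℝ × EuclideanSpace ℝ (Fin (d + 1)) | p.1 ≤ ⟪p.2, w⟫} :=
      isClosed_le (by fun_prop) (by fun_prop)
    exact (c1.inter c2).measurableSet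
  have h1 : ∀ t, pairM d v w t =
      ∫ y, S.indicator (fun _ => (1:ℝ)) (t, y) ∂(sigmaMeasure d) := by
    intro t
    have := integral_indicator_const (μ := sigmaMeasure d) (1:ℝ) ((meas_cap t v).inter (meas_cap t w))
    rw [smul_eq_mul, mul_one] at this
    rw [pairM, ← this]
    rfl
  simp only [h1]
  rw [integral_integral_swap (f := fun t y => S.indicator (fun _ => (1:ℝ)) (t, y))
    ((integrable_const (1:ℝ)).indicator hS)]
  have h2 : ∀ᵐ y ∂(sigmaMeasure d),
      ∫ t in Set.Icc (-1 : ℝ) 1, S.indicator (fun _ => (1:ℝ)) (t, y) =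
      1 + (⟪y, v⟫ + ⟪y, w⟫) / 2 - |⟪y, v - w⟫| / 2 := by
    filter_upwards [ae_inner_le v, ae_inner_le w] with y h1 h2
    rw [hv] at h1
    rw [hw] at h2
    have hm : (fun t => S.indicator (fun _ => (1:ℝ)) (t, y)) =
        (Set.Iic (min ⟪y, v⟫ ⟪y, w⟫)).indicator (fun _ => (1:ℝ)) := by
      ext t
      simp [S, Set.indicator_apply]
    rw [hm, setIntegral_indicator measurableSet_Iic]
    have : Set.Icc (-1:ℝ) 1 ∩ Set.Iic (min ⟪y, v⟫ ⟪y, w⟫) = Set.Icc (-1) (min ⟪y, v⟫ ⟪y, w⟫) := by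
      ext t
      have : min ⟪y, v⟫ ⟪y, w⟫ ≤ 1 := (min_le_left _ _).trans (abs_le.1 h1).2
      simp only [Set.mem_inter_iff, Set.mem_Icc, Set.mem_Iic]
      constructor
      · rintro ⟨⟨a, b⟩, c⟩; exact ⟨a, c⟩
      · rintro ⟨a, c⟩; exact ⟨⟨a, c.trans this⟩, c⟩
    have hge : -1 ≤ min ⟪y, v⟫ ⟪y, w⟫ := le_min (abs_le.1 h1).1 (abs_le.1 h2).1
    rw [this, setIntegral_const, Real.volume_real_Icc_of_le hge, inner_sub_right]
    simp only [smul_eq_mul]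
    rcases le_total ⟪y, v⟫ ⟪y, w⟫ with h | h
    · rw [min_eq_left h, abs_of_nonpos (by linarith)]; ring
    · rw [min_eq_right h, abs_of_nonneg (by linarith)]; ring
  have ha : ∀ u : EuclideanSpace ℝ (Fin (d + 1)), ‖u‖ = 1 →
      ∫ y, ⟪y, u⟫ ∂(sigmaMeasure d) = ∫ y, ⟪y, e0 d⟫ ∂(sigmaMeasure d) := fun u hu =>
    integral_rot (by rw [hu, norm_e0]) (fun s => s)
  have i1 : Integrable (fun y => (⟪y, v⟫ + ⟪y, w⟫) / 2) (sigmaMeasure d) :=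
    ((int_inner v).add (int_inner w)).div_const 2
  have i01 : Integrable (fun y => 1 + (⟪y, v⟫ + ⟪y, w⟫) / 2) (sigmaMeasure d) :=
    (integrable_const _).add i1
  have i2 := (int_inner (v - w)).abs.div_const 2
  have i0 : Integrable (fun _ : EuclideanSpace ℝ (Fin (d + 1)) => (1:ℝ)) (sigmaMeasure d) :=
    integrable_const _
  rw [integral_congr_ae h2, integral_sub i01 i2, integral_add i0 i1, integral_div,
    integral_div, integral_add (int_inner v) (int_inner w), ha v hv, ha w hw, int_abs, dist_eq_norm]
  simp
  ring

lemma stolarsky (d N : ℕ) (hN : 0 < N) : ∃ B : ℝ, ∀ x : Fin N → EuclideanSpace ℝ (Fin (d + 1)),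
    (∀ k, x k ∈ sphere (0 : EuclideanSpace ℝ (Fin (d + 1))) 1) →
    L2DiscSq d N x = B - ((N : ℝ) ^ 2)⁻¹ * (cst d / 2) * ∑ j, ∑ k, dist (x j) (x k) := by
  refine ⟨1 + (∫ y, ⟪y, e0 d⟫ ∂(sigmaMeasure d)) - ∫ t in Set.Icc (-1 : ℝ) 1, capG d t ^ 2, ?_⟩
  intro x hx
  have hx' : ∀ k, ‖x k‖ = 1 := fun k => by simpa using hx k
  have hN' : (N : ℝ) ≠ 0 := by positivity
  unfold L2DiscSq
  simp only [inner_integral hN x hx']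
  have hs : IntegrableOn (fun t => ∑ j, ∑ k, pairM d (x j) (x k) t) (Set.Icc (-1) 1) :=
    integrable_finsetSum _ fun j _ => integrable_finsetSum _ fun k _ => pairM_int _ _ _
  rw [integral_sub (hs.const_mul _) (capG_int d), integral_const_mul, integral_finsetSum _
    fun j _ => integrable_finsetSum _ fun k _ => pairM_int _ _ _]
  have : ∀ j, ∫ t in Set.Icc (-1 : ℝ) 1, ∑ k, pairM d (x j) (x k) t =
      ∑ k, (1 + (∫ y, ⟪y, e0 d⟫ ∂(sigmaMeasure d)) - cst d / 2 * dist (x j) (x k)) := by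
    intro j
    rw [integral_finsetSum _ fun k _ => pairM_int _ _ _]
    exact Finset.sum_congr rfl fun k _ => pairM_val _ _ (hx' j) (hx' k)
  simp only [this, Finset.sum_sub_distrib, ← Finset.mul_sum]
  simp
  field_simp
  ring

/-- An `N`-point configuration on `S^d` (`d ≥ 2`) has minimal spherical cap `L²`-discrepancy
among all `N`-point configurations on `S^d` if and only if it has maximal sum of pairwise
Euclidean distances among all `N`-point configurations on `S^d`. -/
theorem minimal_L2Disc_iff_maximal_sum_of_distances (d : ℕ) (hd : 2 ≤ d) (N : ℕ) (hN : 0 < N)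
    (x : Fin N → EuclideanSpace ℝ (Fin (d + 1)))
    (hx : ∀ k, x k ∈ sphere (0 : EuclideanSpace ℝ (Fin (d + 1))) 1) :
    (∀ y : Fin N → EuclideanSpace ℝ (Fin (d + 1)),
        (∀ k, y k ∈ sphere (0 : EuclideanSpace ℝ (Fin (d + 1))) 1) →
        L2Disc d N x ≤ L2Disc d N y) ↔
      (∀ y : Fin N → EuclideanSpace ℝ (Fin (d + 1)),
        (∀ k, y k ∈ sphere (0 : EuclideanSpace ℝ (Fin (d + 1))) 1) →
        ∑ j, ∑ k, dist (y j) (y k) ≤ ∑ j, ∑ k, dist (x j) (x k)) := by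
  obtain ⟨B, hB⟩ := stolarsky d N hN
  have hc : 0 < ((N : ℝ) ^ 2)⁻¹ * (cst d / 2) := by
    have := cst_pos d
    positivity
  refine forall_congr' fun y => forall_congr' fun hy => ?_
  have h0 : 0 ≤ L2DiscSq d N y := by
    unfold L2DiscSq
    exact integral_nonneg fun t => integral_nonneg fun z => sq_nonneg _
  unfold L2Disc
  rw [Real.sqrt_le_sqrt_iff h0, hB x hx, hB y hy, sub_le_sub_iff_left]
  exact mul_le_mul_iff_right₀ hc
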